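/- There exists an absolute constant C > 0 such that for every θ ∈ (0,1) and every positive integer n, ∫_{A} G(s,t,u,v) ds dt du dv ≤ C · n^{2-θ} θ^{-2} (1-θ)^{-2}, and there exists an absolute constant c > 0 such that this integral is ≥ c · n^{2-θ} θ^{-2} (1-θ)^{-2} whenever additionally n^{1-θ} ≥ 8; here A = { (s,t,u,v) ∈ (0,∞)⁴ : 0 < u < 1, n^{-1/2} ≤ v < 1, s ≥ n^{1/4} u^{1/2} v^{1/2}, t ≥ n^{1/4} }. -/

import Mathlib

open MeasureTheory Set Real

/-- The integrand `G(s,t,u,v)` from the paper's computation of the completely 1-summing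
norm of the identity `OH_n → ℓ^n_p`, with `θ = 2/p'`. Here `p = (s, t, u, v)`. -/
noncomputable def G (θ : ℝ) (n : ℕ) (p : ℝ × ℝ × ℝ × ℝ) : ℝ :=
  (n : ℝ) ^ (2 : ℕ) * p.1 ^ (-1 - 2 * θ) * p.2.1 ^ (-1 - 2 * θ) *
    min (min (min ((n : ℝ)⁻¹ * p.1 ^ (4 : ℝ) * p.2.2.1 ^ (-2 : ℝ) * p.2.2.2 ^ (-2 : ℝ))
                  ((n : ℝ)⁻¹ * p.2.1 ^ (4 : ℝ)))
             (min (p.1 ^ (4 : ℝ) * p.2.2.1 ^ (-2 : ℝ)) (p.2.1 ^ (4 : ℝ) * p.2.2.2 ^ (-2 : ℝ))))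
        (min (min (p.2.2.1 ^ (-2 : ℝ) * p.2.2.2 ^ (-2 : ℝ)) (p.2.2.1 ^ (-2 : ℝ)))
             (min 1 (p.2.2.2 ^ (-2 : ℝ))))

/-- The region of integration. -/
def A (n : ℕ) : Set (ℝ × ℝ × ℝ × ℝ) :=
  {p | 0 < p.1 ∧ 0 < p.2.1 ∧ 0 < p.2.2.1 ∧ 0 < p.2.2.2 ∧ p.2.2.1 < 1 ∧ (n : ℝ) ^ (-(1/2) : ℝ) ≤ p.2.2.2 ∧ p.2.2.2 < 1 ∧ (n : ℝ) ^ ((1:ℝ)/4) * p.2.2.1 ^ ((1:ℝ)/2) * p.2.2.2 ^ ((1:ℝ)/2) ≤ p.1 ∧ (n : ℝ) ^ ((1:ℝ)/4) ≤ p.2.1}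

/-!
On `A n` every term of the minimum is at least `1`, so `G θ n (s, t, u, v) = n² s^(-1-2θ) t^(-1-2θ)`
there. For fixed `(t, u, v)` the variable `s` ranges over a half-line starting at
`n^(1/4) u^(1/2) v^(1/2)`, so integrating it out produces the factor `n^(-θ/2) u^(-θ) v^(-θ) / (2θ)`.
What remains is a product of one-variable power integrals over a box, whence the closed form
`∫_A G = (1 - n^(-(1-θ)/2)) / 4 · n^(2-θ) θ^(-2) (1-θ)^(-2)`.
-/

section FibredIntegral

variable {α β : Type*} [MeasurableSpace α] [MeasurableSpace β] {μ : Measure α} {ν : Measure β}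
  [SFinite μ] [SFinite ν]

theorem integral_prod_symm_of_nonneg {f : α × β → ℝ} (hf : AEStronglyMeasurable f (μ.prod ν))
    (hf_nonneg : 0 ≤ f) (hf_fiber : ∀ᵐ y ∂ν, Integrable (fun x ↦ f (x, y)) μ) :
    ∫ z, f z ∂μ.prod ν = ∫ y, ∫ x, f (x, y) ∂μ ∂ν := by
  by_cases hint : Integrable f (μ.prod ν)
  · exact integral_prod_symm f hint
  · -- By Tonelli the iterated integral diverges too, and both sides take the junk value `0`.
    rw [integral_undef hint, integral_undef]
    intro hiter
    refine hint ((integrable_prod_iff' hf).2 ⟨hf_fiber, ?_⟩)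
    simpa only [norm_of_nonneg (hf_nonneg _)] using hiter

theorem setIntegral_prod_symm_of_nonneg {S : Set (α × β)} {B : Set β} {T : β → Set α}
    {f : α × β → ℝ} (hS : MeasurableSet S) (hB : MeasurableSet B)
    (hST : ∀ x y, (x, y) ∈ S ↔ y ∈ B ∧ x ∈ T y)
    (hf : AEStronglyMeasurable f ((μ.prod ν).restrict S)) (hf_nonneg : ∀ z ∈ S, 0 ≤ f z)
    (hf_fiber : ∀ y ∈ B, IntegrableOn (fun x ↦ f (x, y)) (T y) μ) :
    ∫ z in S, f z ∂μ.prod ν = ∫ y in B, ∫ x in T y, f (x, y) ∂μ ∂ν := by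
  have fiber_of_mem {y} (hy : y ∈ B) : (·, y) ⁻¹' S = T y := by
    ext x; simp [hST, hy]
  have fiber_of_notMem {y} (hy : y ∉ B) : (·, y) ⁻¹' S = ∅ := by
    ext x; simp [hST, hy]
  have hS_fiber (y : β) : MeasurableSet ((·, y) ⁻¹' S) := measurable_prodMk_right hS
  have indicator_fiber (y : β) :
      (fun x ↦ S.indicator f (x, y)) = ((·, y) ⁻¹' S).indicator fun x ↦ f (x, y) := rfl
  rw [← integral_indicator hS, ← integral_indicator hB, integral_prod_symm_of_nonneg
    ((aestronglyMeasurable_indicator_iff hS).2 hf) (indicator_nonneg hf_nonneg)]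
  · simp only [indicator_fiber, integral_indicator (hS_fiber _)]
    refine integral_congr_ae (.of_forall fun y ↦ ?_)
    by_cases hy : y ∈ B
    · simp only [fiber_of_mem hy, indicator_of_mem hy]
    · simp only [fiber_of_notMem hy, indicator_of_notMem hy, setIntegral_empty]
  · refine .of_forall fun y ↦ ?_
    rw [indicator_fiber, integrable_indicator_iff (hS_fiber y)]
    by_cases hy : y ∈ B
    · simpa only [fiber_of_mem hy] using hf_fiber y hy
    · simp only [fiber_of_notMem hy, integrableOn_empty]

end FibredIntegral

section PowerIntegrals

variable {r a b : ℝ}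

theorem integral_Ici_rpow_of_lt (hr : r < -1) (ha : 0 < a) :
    ∫ x in Ici a, x ^ r = -a ^ (r + 1) / (r + 1) := by
  rw [integral_Ici_eq_integral_Ioi, integral_Ioi_rpow_of_lt hr ha]

theorem integrableOn_Ici_rpow_of_lt (hr : r < -1) (ha : 0 < a) :
    IntegrableOn (fun x : ℝ ↦ x ^ r) (Ici a) :=
  (integrableOn_Ioi_rpow_of_lt hr ha).congr_set_ae Ioi_ae_eq_Ici.symm

theorem integral_Ioo_rpow (hr : -1 < r) (hab : a ≤ b) :
    ∫ x in Ioo a b, x ^ r = (b ^ (r + 1) - a ^ (r + 1)) / (r + 1) := by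
  rw [← integral_Ioc_eq_integral_Ioo, ← intervalIntegral.integral_of_le hab,
    integral_rpow (.inl hr)]

end PowerIntegrals

theorem rpow_neg_half_le_half {x : ℝ} (hx : 4 ≤ x) : x ^ (-(1 / 2) : ℝ) ≤ 1 / 2 := by
  have two_le_sqrt : 2 ≤ √x := le_sqrt_of_sq_le (by linarith)
  rw [rpow_neg (by linarith), ← sqrt_eq_rpow, ← one_div]
  exact one_div_le_one_div_of_le two_pos two_le_sqrt

/-- The box over which `(t, u, v)` ranges in the region `A n`. -/
def tuvBox (n : ℕ) : Set (ℝ × ℝ × ℝ) :=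
  Ici ((n : ℝ) ^ ((1 : ℝ) / 4)) ×ˢ Ioo 0 1 ×ˢ Ico ((n : ℝ) ^ (-(1 / 2) : ℝ)) 1

/-- The left endpoint of the half-line over which `s` ranges in the region `A n` when
`q = (t, u, v)` is fixed. -/
noncomputable def sLower (n : ℕ) (q : ℝ × ℝ × ℝ) : ℝ :=
  (n : ℝ) ^ ((1 : ℝ) / 4) * q.2.1 ^ ((1 : ℝ) / 2) * q.2.2 ^ ((1 : ℝ) / 2)

section Region

variable {n : ℕ} {s t u v : ℝ}

theorem pos_of_mem_tuvBox (hn : 0 < n) {q : ℝ × ℝ × ℝ} (hq : q ∈ tuvBox n) :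
    0 < q.1 ∧ 0 < q.2.1 ∧ 0 < q.2.2 :=
  ⟨(by positivity : (0 : ℝ) < (n : ℝ) ^ ((1 : ℝ) / 4)).trans_le hq.1, hq.2.1.1,
    (by positivity : (0 : ℝ) < (n : ℝ) ^ (-(1 / 2) : ℝ)).trans_le hq.2.2.1⟩

theorem sLower_pos (hn : 0 < n) {q : ℝ × ℝ × ℝ} (hq : q ∈ tuvBox n) : 0 < sLower n q := by
  obtain ⟨-, hu, hv⟩ := pos_of_mem_tuvBox hn hq
  unfold sLower
  positivity

theorem sLower_rpow_neg_two_mul (hn : 0 < n) {q : ℝ × ℝ × ℝ} (hq : q ∈ tuvBox n) (θ : ℝ) :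
    sLower n q ^ (-(2 * θ)) = (n : ℝ) ^ (-(θ / 2)) * (q.2.1 ^ (-θ) * q.2.2 ^ (-θ)) := by
  obtain ⟨-, hu, hv⟩ := pos_of_mem_tuvBox hn hq
  rw [sLower, mul_rpow (by positivity) (by positivity), mul_rpow (by positivity) (by positivity),
    ← rpow_mul n.cast_nonneg, ← rpow_mul hu.le, ← rpow_mul hv.le, mul_assoc]
  ring_nf

theorem measurableSet_tuvBox (n : ℕ) : MeasurableSet (tuvBox n) :=
  measurableSet_Ici.prod (measurableSet_Ioo.prod measurableSet_Ico)

theorem mem_A_iff (hn : 0 < n) (s : ℝ) (q : ℝ × ℝ × ℝ) :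
    (s, q) ∈ A n ↔ q ∈ tuvBox n ∧ s ∈ Ici (sLower n q) := by
  constructor
  · rintro ⟨-, -, hu, -, hu1, hvn, hv1, hs, ht⟩
    exact ⟨⟨ht, ⟨hu, hu1⟩, hvn, hv1⟩, hs⟩
  · rintro ⟨hq, hs⟩
    obtain ⟨ht0, hu0, hv0⟩ := pos_of_mem_tuvBox hn hq
    exact ⟨(sLower_pos hn hq).trans_le hs, ht0, hu0, hv0, hq.2.1.2, hq.2.2.1, hq.2.2.2, hs, hq.1⟩

theorem measurableSet_A (n : ℕ) : MeasurableSet (A n) := by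
  simp only [A, ofPred_and]
  repeat' apply MeasurableSet.inter
  all_goals first
    | exact measurableSet_lt (by fun_prop) (by fun_prop)
    | exact measurableSet_le (by fun_prop) (by fun_prop)

theorem natCast_le_pow_four_of_mem_A (h : (s, t, u, v) ∈ A n) : (n : ℝ) ≤ t ^ 4 := by
  obtain ⟨-, -, -, -, -, -, -, -, ht⟩ := h
  calc (n : ℝ) = ((n : ℝ) ^ ((1 : ℝ) / 4)) ^ 4 := by
        rw [← rpow_mul_natCast n.cast_nonneg]; norm_num
    _ ≤ t ^ 4 := by gcongr

theorem one_le_mul_sq_of_mem_A (hn : 0 < n) (h : (s, t, u, v) ∈ A n) : 1 ≤ n * v ^ 2 := by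
  obtain ⟨-, -, -, -, -, hv, -⟩ := h
  have hn0 : (n : ℝ) ≠ 0 := by positivity
  calc (1 : ℝ) = n * ((n : ℝ) ^ (-(1 / 2) : ℝ)) ^ 2 := by
        rw [← rpow_mul_natCast n.cast_nonneg]; norm_num [rpow_neg_one, hn0]
    _ ≤ n * v ^ 2 := by gcongr

theorem mul_sq_mul_sq_le_pow_four_of_mem_A (h : (s, t, u, v) ∈ A n) :
    n * u ^ 2 * v ^ 2 ≤ s ^ 4 := by
  obtain ⟨-, -, hu, hv, -, -, -, hs, -⟩ := h
  calc (n : ℝ) * u ^ 2 * v ^ 2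
      = ((n : ℝ) ^ ((1 : ℝ) / 4) * u ^ ((1 : ℝ) / 2) * v ^ ((1 : ℝ) / 2)) ^ 4 := by
        rw [mul_pow, mul_pow, ← rpow_mul_natCast n.cast_nonneg, ← rpow_mul_natCast hu.le,
          ← rpow_mul_natCast hv.le]
        norm_num
    _ ≤ s ^ 4 := by gcongr

end Region

section Integrand

variable {θ : ℝ} {n : ℕ}

theorem measurable_G (θ : ℝ) (n : ℕ) : Measurable (G θ n) := by
  unfold G
  fun_prop

theorem G_eq_of_mem_A (θ : ℝ) (hn : 0 < n) {p : ℝ × ℝ × ℝ × ℝ} (hp : p ∈ A n) :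
    G θ n p = (n : ℝ) ^ 2 * p.1 ^ (-1 - 2 * θ) * p.2.1 ^ (-1 - 2 * θ) := by
  obtain ⟨s, t, u, v⟩ := p
  have hs4 := mul_sq_mul_sq_le_pow_four_of_mem_A hp
  have ht4 := natCast_le_pow_four_of_mem_A hp
  have hnv := one_le_mul_sq_of_mem_A hn hp
  obtain ⟨-, -, hu : 0 < u, hv : 0 < v, hu1 : u < 1, -, hv1 : v < 1, -, -⟩ := hp
  have hn1 : (1 : ℝ) ≤ n := mod_cast hn
  have hu2 : 1 ≤ (u ^ 2)⁻¹ := (one_le_inv₀ (by positivity)).2 (pow_le_one₀ hu.le hu1.le)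
  have hv2 : 1 ≤ (v ^ 2)⁻¹ := (one_le_inv₀ (by positivity)).2 (pow_le_one₀ hv.le hv1.le)
  have term_stuv : 1 ≤ (n : ℝ)⁻¹ * s ^ 4 * (u ^ 2)⁻¹ * (v ^ 2)⁻¹ := by
    field_simp
    linarith
  have term_nt : 1 ≤ (n : ℝ)⁻¹ * t ^ 4 := by
    field_simp
    exact ht4
  have term_su : 1 ≤ s ^ 4 * (u ^ 2)⁻¹ := by
    rw [← div_eq_mul_inv, one_le_div (by positivity)]
    calc u ^ 2 ≤ u ^ 2 * (n * v ^ 2) := le_mul_of_one_le_right (sq_nonneg u) hnv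
      _ = n * u ^ 2 * v ^ 2 := by ring
      _ ≤ s ^ 4 := hs4
  have term_tv : 1 ≤ t ^ 4 * (v ^ 2)⁻¹ := one_le_mul_of_one_le_of_one_le (hn1.trans ht4) hv2
  have term_uv : 1 ≤ (u ^ 2)⁻¹ * (v ^ 2)⁻¹ := one_le_mul_of_one_le_of_one_le hu2 hv2
  simp only [G, rpow_ofNat, rpow_neg_ofNat, zpow_neg, zpow_ofNat]
  rw [min_eq_left hv2, min_eq_right (le_min term_uv hu2),
    min_eq_right (le_min (le_min term_stuv term_nt) (le_min term_su term_tv)), mul_one]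

theorem G_nonneg_of_mem_A (θ : ℝ) (hn : 0 < n) {p : ℝ × ℝ × ℝ × ℝ} (hp : p ∈ A n) :
    0 ≤ G θ n p := by
  rw [G_eq_of_mem_A θ hn hp]
  have hs : 0 < p.1 := hp.1
  have ht : 0 < p.2.1 := hp.2.1
  positivity

theorem G_eqOn_fiber (θ : ℝ) (hn : 0 < n) {q : ℝ × ℝ × ℝ} (hq : q ∈ tuvBox n) :
    EqOn (fun s ↦ G θ n (s, q))
      (fun s ↦ (n : ℝ) ^ 2 * q.1 ^ (-1 - 2 * θ) * s ^ (-1 - 2 * θ)) (Ici (sLower n q)) :=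
  fun s hs ↦ (G_eq_of_mem_A θ hn ((mem_A_iff hn s q).2 ⟨hq, hs⟩)).trans (mul_right_comm _ _ _)

theorem integrableOn_G_fiber (hθ : 0 < θ) (hn : 0 < n) {q : ℝ × ℝ × ℝ} (hq : q ∈ tuvBox n) :
    IntegrableOn (fun s ↦ G θ n (s, q)) (Ici (sLower n q)) :=
  (integrableOn_congr_fun (G_eqOn_fiber θ hn hq) measurableSet_Ici).2
    ((integrableOn_Ici_rpow_of_lt (by linarith) (sLower_pos hn hq)).const_mul _)

theorem integral_G_fiber (hθ : 0 < θ) (hn : 0 < n) {q : ℝ × ℝ × ℝ} (hq : q ∈ tuvBox n) :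
    ∫ s in Ici (sLower n q), G θ n (s, q) =
      (n : ℝ) ^ 2 * ((n : ℝ) ^ (-(θ / 2)) / (2 * θ)) *
        (q.1 ^ (-1 - 2 * θ) * (q.2.1 ^ (-θ) * q.2.2 ^ (-θ))) := by
  rw [setIntegral_congr_fun measurableSet_Ici (G_eqOn_fiber θ hn hq), integral_const_mul,
    integral_Ici_rpow_of_lt (by linarith) (sLower_pos hn hq),
    show -1 - 2 * θ + 1 = -(2 * θ) by ring, neg_div_neg_eq, sLower_rpow_neg_two_mul hn hq]
  ring

theorem integral_tuvBox_rpow (hθ : 0 < θ) (hθ1 : θ < 1) (hn : 0 < n) :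
    ∫ q in tuvBox n, q.1 ^ (-1 - 2 * θ) * (q.2.1 ^ (-θ) * q.2.2 ^ (-θ)) =
      (n : ℝ) ^ (-(θ / 2)) / (2 * θ) *
        (1 / (1 - θ) * ((1 - (n : ℝ) ^ (-((1 - θ) / 2))) / (1 - θ))) := by
  have hn1 : (1 : ℝ) ≤ n := mod_cast hn
  have t_integral : ∫ t in Ici ((n : ℝ) ^ ((1 : ℝ) / 4)), t ^ (-1 - 2 * θ) =
      (n : ℝ) ^ (-(θ / 2)) / (2 * θ) := by
    rw [integral_Ici_rpow_of_lt (by linarith) (by positivity), ← rpow_mul n.cast_nonneg,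
      show -1 - 2 * θ + 1 = -(2 * θ) by ring, neg_div_neg_eq]
    ring_nf
  have u_integral : ∫ u in Ioo (0 : ℝ) 1, u ^ (-θ) = 1 / (1 - θ) := by
    rw [integral_Ioo_rpow (by linarith) zero_le_one, one_rpow, zero_rpow (by linarith), sub_zero,
      neg_add_eq_sub]
  have v_integral : ∫ v in Ico ((n : ℝ) ^ (-(1 / 2) : ℝ)) 1, v ^ (-θ) =
      (1 - (n : ℝ) ^ (-((1 - θ) / 2))) / (1 - θ) := by
    rw [integral_Ico_eq_integral_Ioo, integral_Ioo_rpow (by linarith)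
      (rpow_le_one_of_one_le_of_nonpos hn1 (by norm_num)), one_rpow, ← rpow_mul n.cast_nonneg,
      neg_add_eq_sub]
    ring_nf
  rw [tuvBox, Measure.volume_eq_prod, setIntegral_prod_mul (fun t : ℝ ↦ t ^ (-1 - 2 * θ))
      (fun w : ℝ × ℝ ↦ w.1 ^ (-θ) * w.2 ^ (-θ)), Measure.volume_eq_prod,
    setIntegral_prod_mul (fun u : ℝ ↦ u ^ (-θ)) (fun v : ℝ ↦ v ^ (-θ)),
    t_integral, u_integral, v_integral]

theorem setIntegral_A_G (hθ : 0 < θ) (hθ1 : θ < 1) (hn : 0 < n) :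
    ∫ p in A n, G θ n p = (1 - (n : ℝ) ^ (-((1 - θ) / 2))) / 4 *
      ((n : ℝ) ^ (2 - θ) * θ ^ (-2 : ℝ) * (1 - θ) ^ (-2 : ℝ)) := by
  have hn_rpow : (n : ℝ) ^ (2 - θ) = (n : ℝ) ^ 2 * ((n : ℝ) ^ (-(θ / 2))) ^ 2 := by
    rw [← rpow_mul_natCast n.cast_nonneg, ← rpow_natCast, ← rpow_add (by positivity)]
    push_cast
    ring_nf
  have hθ_ne : 1 - θ ≠ 0 := by linarith
  rw [Measure.volume_eq_prod, setIntegral_prod_symm_of_nonneg (measurableSet_A n)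
      (measurableSet_tuvBox n) (mem_A_iff hn) (measurable_G θ n).aestronglyMeasurable
      (fun _ ↦ G_nonneg_of_mem_A θ hn) (fun _ ↦ integrableOn_G_fiber hθ hn),
    setIntegral_congr_fun (measurableSet_tuvBox n) (fun _ ↦ integral_G_fiber hθ hn),
    integral_const_mul, integral_tuvBox_rpow hθ hθ1 hn, hn_rpow]
  simp only [rpow_neg_ofNat, zpow_neg, zpow_ofNat]
  field_simp
  ring

end Integrand

theorem stmt_7 :
    (∃ C : ℝ, 0 < C ∧ ∀ θ : ℝ, 0 < θ → θ < 1 → ∀ n : ℕ, 0 < n →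
      (∫ p in A n, G θ n p) ≤ C * ((n : ℝ) ^ (2 - θ) * θ ^ (-2 : ℝ) * (1 - θ) ^ (-2 : ℝ))) ∧
    (∃ c : ℝ, 0 < c ∧ ∀ θ : ℝ, 0 < θ → θ < 1 → ∀ n : ℕ, 0 < n →
      (8 : ℝ) ≤ (n : ℝ) ^ (1 - θ) →
      c * ((n : ℝ) ^ (2 - θ) * θ ^ (-2 : ℝ) * (1 - θ) ^ (-2 : ℝ)) ≤ ∫ p in A n, G θ n p) := by
  constructor
  · refine ⟨1 / 4, by norm_num, fun θ hθ hθ1 n hn ↦ ?_⟩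
    rw [setIntegral_A_G hθ hθ1 hn]
    have : 0 < 1 - θ := sub_pos.2 hθ1
    gcongr
    exact sub_le_self 1 (by positivity)
  · refine ⟨1 / 8, by norm_num, fun θ hθ hθ1 n hn h8 ↦ ?_⟩
    rw [setIntegral_A_G hθ hθ1 hn]
    have : 0 < 1 - θ := sub_pos.2 hθ1
    have rpow_le_half : (n : ℝ) ^ (-((1 - θ) / 2)) ≤ 1 / 2 := by
      calc (n : ℝ) ^ (-((1 - θ) / 2)) = ((n : ℝ) ^ (1 - θ)) ^ (-(1 / 2) : ℝ) := by
            rw [← rpow_mul n.cast_nonneg]; ring_nf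
        _ ≤ 1 / 2 := rpow_neg_half_le_half (by linarith)
    exact mul_le_mul_of_nonneg_right (by linarith) (by positivity)
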